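/- arXiv:1804.06177 — 6 statements merged into one kernel-verified Lean document; each statement's English description precedes it below -/
import Mathlib

section
/- Let (Z, d) be a proper metric space (every closed ball is compact), and let S be the set of bijective isometries of Z, regarded as a subset of the space of all functions Z → Z with the product topology (topology of pointwise convergence). Then: (1) S is closed in the space of all functions Z → Z; (2) S is a topological group under composition; (3) S is locally compact and second countable; (4) the action of S on Z is proper, i.e. for every compact subset L of Z the set {f ∈ S : f(L) ∩ L ≠ ∅} is compact in S. -/
/-!
An isometry is determined up to small error by its values at nearby points, so pointwise
convergence of isometries is as good as locally uniform convergence. This makes the evaluation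
`S × Z → Z` jointly continuous (hence composition continuous) and makes the restriction of `S`
to a countable dense subset of `Z` a topological embedding into a second countable product. The
identity `d (f⁻¹ z) (f₀⁻¹ z) = d z (f (f₀⁻¹ z))` gives continuity of inversion.

Surjectivity survives pointwise limits because preimages of a point `y` under the approximating
bijections stay in a fixed ball, which is compact by properness, and any cluster point of them
is a preimage of `y`. Finally, the elements of `S` moving a point `x` into a fixed ball form a
closed subset of a product of closed balls, so they are compact by Tychonoff; this yields local
compactness, and properness of the action follows since `f(L) ∩ L ≠ ∅` is a closed condition
which bounds `d (f x) x`.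
-/

open Set Filter Topology

/-- The set of bijective isometries of `Z`, inside the space of all self-maps. -/
def bijIsoms (Z : Type*) [MetricSpace Z] : Set (Z → Z) :=
  {f : Z → Z | Function.Bijective f ∧ Isometry f}

section
variable {Z : Type*} [MetricSpace Z]

lemma bijIsoms_dist (f : bijIsoms Z) (x y : Z) : dist (f.1 x) (f.1 y) = dist x y :=
  f.2.2.dist_eq x y

lemma isClosed_bijIsoms [ProperSpace Z] : IsClosed (bijIsoms Z) := by
  rw [isClosed_iff_ultrafilter]
  intro f u huf hu
  have hev : ∀ x, Tendsto (fun g : Z → Z => g x) u (𝓝 (f x)) := fun x =>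
    ((continuous_apply x).tendsto f).mono_left huf
  have hiso : Isometry f := by
    refine Isometry.of_dist_eq fun x y => ?_
    refine tendsto_nhds_unique ((hev x).dist (hev y)) ?_
    refine tendsto_const_nhds.congr' ?_
    filter_upwards [hu] with g hg using (hg.2.dist_eq x y).symm
  refine ⟨⟨hiso.injective, fun y => ?_⟩, hiso⟩
  have : Nonempty Z := ⟨y⟩
  -- Along `u`, the preimages of `y` lie in a compact ball around `y`, so they converge.
  have hball : ∀ᶠ g in (u : Filter (Z → Z)),
      Function.invFun g y ∈ Metric.closedBall y (dist (f y) y + 1) := by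
    have h1 := (hev y).dist (tendsto_const_nhds (x := y))
    filter_upwards [hu, h1.eventually (gt_mem_nhds (lt_add_one _))] with g hg hlt
    rw [Metric.mem_closedBall, ← hg.2.dist_eq, Function.invFun_eq (hg.1.2 y), dist_comm]
    exact hlt.le
  obtain ⟨x, -, hx⟩ := (isCompact_closedBall y (dist (f y) y + 1)).ultrafilter_le_nhds
    (u.map fun g => Function.invFun g y) (le_principal_iff.2 hball)
  have hx' : Tendsto (fun g : Z → Z => Function.invFun g y) u (𝓝 x) := hx
  refine ⟨x, dist_le_zero.1 (le_of_eq ?_)⟩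
  refine tendsto_nhds_unique ((hev x).dist (tendsto_const_nhds (x := y))) ?_
  have h2 := (tendsto_const_nhds (x := x)).dist hx'
  rw [dist_self] at h2
  refine h2.congr' ?_
  filter_upwards [hu] with g hg
  rw [← hg.2.dist_eq, Function.invFun_eq (hg.1.2 y)]

lemma continuous_bijIsoms_apply (z : Z) : Continuous fun f : bijIsoms Z => f.1 z :=
  (continuous_apply z).comp continuous_subtype_val

lemma continuous_bijIsoms_eval : Continuous fun p : bijIsoms Z × Z => p.1.1 p.2 :=
  continuous_prod_of_continuous_lipschitzWith' _ 1 (fun f => f.2.2.lipschitz)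
    continuous_bijIsoms_apply

lemma bijIsoms_exists_inv {f : Z → Z} (hf : f ∈ bijIsoms Z) :
    ∃ g ∈ bijIsoms Z, f ∘ g = id ∧ g ∘ f = id := by
  obtain ⟨g, hl, hr⟩ := Function.bijective_iff_has_inverse.1 hf.1
  refine ⟨g, ⟨Function.bijective_iff_has_inverse.2 ⟨f, hr, hl⟩, ?_⟩, hr.comp_eq_id, hl.comp_eq_id⟩
  exact hf.2.right_inv hr

lemma continuous_bijIsoms_inv (inv : bijIsoms Z → bijIsoms Z)
    (h : ∀ f, f.1 ∘ (inv f).1 = id) : Continuous inv := by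
  refine Continuous.subtype_mk (f := fun f => (inv f).1) (continuous_pi fun z => ?_) _
  refine continuous_iff_continuousAt.2 fun f₀ => ?_
  have h0 : ∀ f : bijIsoms Z, f.1 ((inv f).1 z) = z := fun f => congrFun (h f) z
  refine tendsto_iff_dist_tendsto_zero.2 ?_
  have h1 := (tendsto_const_nhds (x := z)).dist
    ((continuous_bijIsoms_apply ((inv f₀).1 z)).tendsto f₀)
  rw [h0 f₀, dist_self] at h1
  refine h1.congr fun f => ?_
  rw [← bijIsoms_dist f ((inv f).1 z), h0 f]

/-- By Tychonoff: such an `f` maps each `z` into the closed ball of radius `dist z x + r`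
about `a`. -/
lemma isCompact_bijIsoms_ball [ProperSpace Z] (x a : Z) (r : ℝ) :
    IsCompact {f : bijIsoms Z | dist (f.1 x) a ≤ r} := by
  rw [Subtype.isCompact_iff]
  have hK : IsCompact (univ.pi fun z => Metric.closedBall a (dist z x + r)) :=
    isCompact_univ_pi fun z => isCompact_closedBall _ _
  refine hK.of_isClosed_subset ?_ ?_
  · exact isClosed_bijIsoms.isClosedEmbedding_subtypeVal.isClosedMap _
      (isClosed_le ((continuous_bijIsoms_apply x).dist continuous_const) continuous_const)
  · rintro _ ⟨f, hf, rfl⟩ z -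
    have h1 := dist_triangle (f.1 z) (f.1 x) a
    rw [bijIsoms_dist f] at h1
    exact h1.trans (add_le_add_right hf _)

lemma locallyCompactSpace_bijIsoms [ProperSpace Z] : LocallyCompactSpace (bijIsoms Z) := by
  have : WeaklyLocallyCompactSpace (bijIsoms Z) := by
    refine ⟨fun f => ?_⟩
    rcases isEmpty_or_nonempty Z with hZ | ⟨⟨x⟩⟩
    · exact ⟨univ, subsingleton_univ.isCompact, univ_mem⟩
    · refine ⟨_, isCompact_bijIsoms_ball x (f.1 x) 1, ?_⟩
      have h := (continuous_bijIsoms_apply x).tendsto f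
      exact h (Metric.closedBall_mem_nhds _ one_pos)
  infer_instance

/-- Convergence of isometries on a dense subset implies pointwise convergence everywhere. -/
lemma isInducing_bijIsoms_restrict {D : Set Z} (hD : Dense D) :
    IsInducing fun (f : bijIsoms Z) (d : D) => f.1 d := by
  refine isInducing_iff_nhds.2 fun f => le_antisymm ?_ ?_
  · exact tendsto_iff_comap.1
      ((continuous_pi fun d : D => continuous_bijIsoms_apply (d : Z)).tendsto f)
  · rw [nhds_subtype_eq_comap, ← tendsto_iff_comap, tendsto_pi_nhds]
    intro z
    refine Metric.tendsto_nhds.2 fun ε hε => ?_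
    obtain ⟨d, hd, hzd⟩ := hD.exists_dist_lt z (by positivity : 0 < ε / 3)
    have h1 : Tendsto (fun g : bijIsoms Z => g.1 d)
        (comap (fun (f : bijIsoms Z) (d : D) => f.1 d) (𝓝 fun d : D => f.1 d)) (𝓝 (f.1 d)) :=
      ((continuous_apply (⟨d, hd⟩ : D)).tendsto (fun d : D => f.1 d)).comp tendsto_comap
    filter_upwards [Metric.tendsto_nhds.1 h1 (ε / 3) (by positivity)] with g hg
    have h2 := dist_triangle4 (g.1 z) (g.1 d) (f.1 d) (f.1 z)
    rw [bijIsoms_dist g, bijIsoms_dist f, dist_comm d z] at h2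
    linarith

lemma secondCountableTopology_bijIsoms [ProperSpace Z] :
    SecondCountableTopology (bijIsoms Z) := by
  obtain ⟨D, hDc, hD⟩ := TopologicalSpace.exists_countable_dense Z
  have : Countable D := hDc.to_subtype
  exact (isInducing_bijIsoms_restrict hD).secondCountableTopology

lemma isCompact_bijIsoms_return [ProperSpace Z] {L : Set Z} (hL : IsCompact L) :
    IsCompact {f : bijIsoms Z | (f.1 '' L ∩ L).Nonempty} := by
  rcases L.eq_empty_or_nonempty with rfl | ⟨x, hx⟩
  · simp
  refine (isCompact_bijIsoms_ball x x (Metric.diam L + Metric.diam L)).of_isClosed_subset ?_ ?_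
  · -- The set is the projection of a closed subset of `S × L` along the compact factor `L`.
    have : CompactSpace L := isCompact_iff_compactSpace.1 hL
    have hc : IsClosed {p : bijIsoms Z × L | p.1.1 p.2 ∈ L} :=
      hL.isClosed.preimage (continuous_bijIsoms_eval.comp
        (continuous_fst.prodMk (continuous_subtype_val.comp continuous_snd)))
    convert isClosedMap_fst_of_compactSpace _ hc using 1
    ext f
    constructor
    · rintro ⟨_, ⟨l, hl, rfl⟩, hfl⟩
      exact ⟨(f, ⟨l, hl⟩), hfl, rfl⟩
    · rintro ⟨⟨f, l⟩, hfl, rfl⟩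
      exact ⟨_, ⟨l, l.2, rfl⟩, hfl⟩
  · rintro f ⟨_, ⟨l, hl, rfl⟩, hfl⟩
    have h1 := dist_triangle (f.1 x) (f.1 l) x
    rw [bijIsoms_dist f] at h1
    exact h1.trans (add_le_add (Metric.dist_le_diam_of_mem hL.isBounded hx hl)
      (Metric.dist_le_diam_of_mem hL.isBounded hfl hx))

end

/-- The group of bijective isometries of a proper metric space, as a subset of the
space of all maps `Z → Z` with the topology of pointwise convergence, is closed,
is a topological group under composition, is locally compact and second countable,
and acts properly on `Z`. -/
theorem isometryGroup_properly_acting_locally_compact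
    {Z : Type*} [MetricSpace Z] [ProperSpace Z] (S : Set (Z → Z))
    (hS : S = {f : Z → Z | Function.Bijective f ∧ Isometry f}) :
    -- (1) `S` is closed in `Z → Z` with the product topology
    IsClosed S ∧
    -- (2) `S` is a topological group under composition:
    --     it contains the identity, is stable under composition, every element has
    --     a (two-sided) compositional inverse in `S`, and composition and inversion
    --     are continuous
    (id ∈ S) ∧
    (∀ f ∈ S, ∀ g ∈ S, f ∘ g ∈ S) ∧
    (∀ f ∈ S, ∃ g ∈ S, f ∘ g = id ∧ g ∘ f = id) ∧
    Continuous (fun p : ↥S × ↥S => ((p.1 : Z → Z) ∘ (p.2 : Z → Z))) ∧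
    (∃ inv : ↥S → ↥S, (∀ f : ↥S, ((inv f : Z → Z)) ∘ (f : Z → Z) = id ∧
        (f : Z → Z) ∘ ((inv f : Z → Z)) = id) ∧ Continuous inv) ∧
    -- (3) `S` is locally compact and second countable
    LocallyCompactSpace ↥S ∧ SecondCountableTopology ↥S ∧
    -- (4) the action of `S` on `Z` is proper
    (∀ L : Set Z, IsCompact L → IsCompact {f : ↥S | ((f : Z → Z) '' L ∩ L).Nonempty}) := by
  obtain rfl : S = bijIsoms Z := hS
  have hinv : ∀ f : bijIsoms Z, ∃ g : bijIsoms Z, g.1 ∘ f.1 = id ∧ f.1 ∘ g.1 = id := fun f =>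
    let ⟨g, hg, h1, h2⟩ := bijIsoms_exists_inv f.2
    ⟨⟨g, hg⟩, h2, h1⟩
  choose inv hinv using hinv
  refine ⟨isClosed_bijIsoms, ⟨Function.bijective_id, isometry_id⟩,
    fun f hf g hg => ⟨hf.1.comp hg.1, hf.2.comp hg.2⟩, fun f hf => bijIsoms_exists_inv hf,
    continuous_pi fun z => ?_, ⟨inv, hinv, continuous_bijIsoms_inv inv fun f => (hinv f).2⟩,
    locallyCompactSpace_bijIsoms, secondCountableTopology_bijIsoms,
    fun L hL => isCompact_bijIsoms_return hL⟩
  exact continuous_bijIsoms_eval.comp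
    (continuous_fst.prodMk ((continuous_bijIsoms_apply z).comp continuous_snd))
end

section
/- Let G be a group acting on a set X (given the discrete topology), and assume the action is f.s.o. Let G' be the Schlichting closure of the action, i.e. the closure in Map(X) of the set of maps {x ↦ gx : g ∈ G}. Then G', equipped with composition of functions as multiplication and with the subspace topology inherited from Map(X), is a Hausdorff topological group (in particular composition and inversion are continuous on G'), and this topological group is locally compact and totally disconnected. -/
/-!
Since `X` is discrete, a map lies in the Schlichting closure iff on every finite set it agrees
with some element of `G` (`mem_closure_range_smul_iff`). Hence the closure is stable under
composition, its elements are injective, and a two-sided inverse of an element lies in it again.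

The f.s.o. hypothesis enters through `IsFSO.finite_transporter`: for fixed `x`, `z`, `y`, the
elements `g` with `g • x = z` form a coset of the stabilizer of `x`, so they move `y` to finitely
many places only. Applied to inverses, this gives surjectivity: the points `g⁻¹ • y` with
`g • y = f y` form a finite set, and an element of `G` agreeing with `f` on that set and at `y`
exhibits a preimage of `y`. Applied directly, it shows that `{h ∈ G' | h x = f x}`, a
neighbourhood of `f`, is a closed subset of a product of finite sets, hence compact.
-/

/-- An action is f.s.o. (finite stabilizers orbits) if every orbit of every point stabilizer
is finite. -/
def IsFSO (G X : Type*) [Group G] [MulAction G X] : Prop :=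
  ∀ x y : X, {z : X | ∃ g : G, g • x = x ∧ g • y = z}.Finite

/-- For an f.s.o. action, the elements carrying `x` to `z` carry `y` to finitely many points. -/
lemma IsFSO.finite_transporter {G X : Type*} [Group G] [MulAction G X] (hfso : IsFSO G X)
    (x z y : X) : {w : X | ∃ g : G, g • x = z ∧ g • y = w}.Finite := by
  by_cases h : ∃ g₀ : G, g₀ • x = z
  · obtain ⟨g₀, rfl⟩ := h
    refine ((hfso x y).image (fun w => g₀ • w)).subset ?_
    rintro w ⟨g, hg, rfl⟩
    refine ⟨(g₀⁻¹ * g) • y, ⟨g₀⁻¹ * g, ?_, rfl⟩, ?_⟩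
    · rw [mul_smul, hg, inv_smul_smul]
    · simp [mul_smul]
  · refine Set.finite_empty.subset ?_
    rintro w ⟨g, hg, -⟩
    exact h ⟨g, hg⟩

/-- Basic neighbourhoods in the topology of pointwise convergence on maps into a discrete set. -/
lemma mem_closure_range_smul_iff {G X : Type*} [Group G] [MulAction G X] [TopologicalSpace X]
    [DiscreteTopology X] (f : X → X) :
    f ∈ closure (Set.range fun g : G => fun x : X => g • x) ↔
      ∀ F : Set X, F.Finite → ∃ g : G, ∀ x ∈ F, g • x = f x := by
  constructor
  · intro hf F hF
    have hopen : IsOpen (F.pi fun x => ({f x} : Set X)) :=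
      isOpen_set_pi hF fun _ _ => isOpen_discrete _
    obtain ⟨_, hg, g, rfl⟩ := mem_closure_iff.1 hf _ hopen fun x _ => rfl
    exact ⟨g, fun x hx => hg x hx⟩
  · intro h
    rw [mem_closure_iff]
    intro U hU hfU
    obtain ⟨I, u, hu, hsub⟩ := isOpen_pi_iff.1 hU f hfU
    obtain ⟨g, hg⟩ := h I I.finite_toSet
    refine ⟨_, hsub fun x hx => ?_, g, rfl⟩
    simpa only [hg x hx] using (hu x hx).2

/-- Surjectivity is the part of this lemma that uses the f.s.o. hypothesis. -/
lemma IsFSO.bijective_of_mem_closure {G X : Type*} [Group G] [MulAction G X] [TopologicalSpace X]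
    [DiscreteTopology X] (hfso : IsFSO G X) {f : X → X}
    (hf : f ∈ closure (Set.range fun g : G => fun x : X => g • x)) : Function.Bijective f := by
  rw [mem_closure_range_smul_iff] at hf
  constructor
  · intro x y hxy
    obtain ⟨g, hg⟩ := hf {x, y} (by simp)
    have hx := hg x (by simp)
    have hy := hg y (by simp)
    exact MulAction.injective g (hx.trans (hxy.trans hy.symm))
  · intro y
    -- all candidates `g⁻¹ • y` for a preimage of `y`, where `g • y = f y`
    obtain ⟨g, hg⟩ := hf _ ((hfso.finite_transporter (f y) y y).insert y)
    have hy : g • y = f y := hg y (Set.mem_insert _ _)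
    have hmem := hg (g⁻¹ • y) (Set.mem_insert_of_mem _ ⟨g⁻¹, by rw [← hy, inv_smul_smul], rfl⟩)
    exact ⟨g⁻¹ • y, by rw [← hmem, smul_inv_smul]⟩

lemma inverse_mem_closure {G X : Type*} [Group G] [MulAction G X] [TopologicalSpace X]
    [DiscreteTopology X] {f k : X → X}
    (hf : f ∈ closure (Set.range fun g : G => fun x : X => g • x))
    (hk : Function.RightInverse k f) :
    k ∈ closure (Set.range fun g : G => fun x : X => g • x) := by
  rw [mem_closure_range_smul_iff] at hf ⊢
  intro F hF
  obtain ⟨g, hg⟩ := hf (k '' F) (hF.image k)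
  refine ⟨g⁻¹, fun x hx => ?_⟩
  rw [inv_smul_eq_iff, hg _ ⟨x, hx, rfl⟩, hk x]

lemma isOpen_setOf_apply_eq {X : Type*} [TopologicalSpace X] [DiscreteTopology X]
    (S : Set (X → X)) (x z : X) : IsOpen {h : S | (h : X → X) x = z} := by
  have hc : Continuous fun h : S => (h : X → X) x :=
    (continuous_apply x).comp continuous_subtype_val
  exact (isOpen_discrete ({z} : Set X)).preimage hc

/-- For an f.s.o. action, the elements of the Schlichting closure carrying `x` to `z` form a
compact set. -/
lemma IsFSO.isCompact_transporter {G X : Type*} [Group G] [MulAction G X] [TopologicalSpace X]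
    [DiscreteTopology X] (hfso : IsFSO G X) (x z : X) :
    IsCompact (closure (Set.range fun g : G => fun x : X => g • x) ∩ {h | h x = z}) := by
  have hK : IsCompact (Set.univ.pi fun y => {w : X | ∃ g : G, g • x = z ∧ g • y = w}) :=
    isCompact_univ_pi fun y => (hfso.finite_transporter x z y).isCompact
  refine hK.of_isClosed_subset
    (isClosed_closure.inter (isClosed_eq (continuous_apply x) continuous_const)) ?_
  rintro h ⟨hh, hx⟩ y -
  obtain ⟨g, hg⟩ := (mem_closure_range_smul_iff h).1 hh {x, y} (by simp)
  exact ⟨g, (hg x (by simp)).trans hx, hg y (by simp)⟩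

/-- For an f.s.o. action, the Schlichting closure `G'` (closure in `Map(X)`, `X` discrete,
of the maps `x ↦ g • x`), equipped with composition and the subspace topology, is a
Hausdorff topological group which is locally compact and totally disconnected. -/
theorem schlichting_closure_tdlc_group_of_fso
    {G X : Type*} [Group G] [MulAction G X] [TopologicalSpace X] [DiscreteTopology X]
    (hfso : IsFSO G X)
    (G' : Set (X → X)) (hG' : G' = closure (Set.range fun g : G => fun x : X => g • x)) :
    -- `G'` is a group under composition of functions:
    (id ∈ G') ∧
    (∀ f ∈ G', ∀ g ∈ G', f ∘ g ∈ G') ∧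
    (∀ f ∈ G', ∃ g ∈ G', f ∘ g = id ∧ g ∘ f = id) ∧
    -- composition and inversion are continuous on `G'` (subspace topology from `Map(X)`)
    Continuous (fun p : ↥G' × ↥G' => ((p.1 : X → X) ∘ (p.2 : X → X))) ∧
    (∃ inv : ↥G' → ↥G', (∀ f : ↥G', ((inv f : X → X)) ∘ (f : X → X) = id ∧
        (f : X → X) ∘ ((inv f : X → X)) = id) ∧ Continuous inv) ∧
    -- it is a Hausdorff, locally compact, totally disconnected topological space
    T2Space ↥G' ∧ LocallyCompactSpace ↥G' ∧ TotallyDisconnectedSpace ↥G' := by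
  have hinv : ∀ f ∈ G', ∃ g ∈ G', f ∘ g = id ∧ g ∘ f = id := by
    intro f hf
    rw [hG'] at hf
    obtain ⟨k, hl, hr⟩ := Function.bijective_iff_has_inverse.1 (hfso.bijective_of_mem_closure hf)
    exact ⟨k, hG' ▸ inverse_mem_closure hf hr, hr.comp_eq_id, hl.comp_eq_id⟩
  refine ⟨?_, ?_, hinv, ?_, ?_, inferInstance, ?_, inferInstance⟩
  · rw [hG']
    exact subset_closure ⟨1, by ext x; simp⟩
  · intro f hf k hk
    rw [hG', mem_closure_range_smul_iff] at *
    intro F hF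
    obtain ⟨b, hb⟩ := hk F hF
    obtain ⟨a, ha⟩ := hf (k '' F) (hF.image k)
    exact ⟨a * b, fun x hx => by rw [mul_smul, hb x hx, ha _ ⟨x, hx, rfl⟩]; rfl⟩
  · refine continuous_pi fun x => continuous_discrete_rng.2 fun z => ?_
    rw [isOpen_iff_mem_nhds]
    rintro ⟨f, k⟩ (hz : (f : X → X) ((k : X → X) x) = z)
    -- a pair near `(f, k)` takes the same values as `k` at `x` and as `f` at `k x`
    filter_upwards [((isOpen_setOf_apply_eq G' ((k : X → X) x) z).prod
      (isOpen_setOf_apply_eq G' x ((k : X → X) x))).mem_nhds ⟨hz, rfl⟩]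
    rintro ⟨f', k'⟩ ⟨h1 : (f' : X → X) _ = z, h2 : (k' : X → X) x = _⟩
    change (f' : X → X) ((k' : X → X) x) = z
    rw [h2, h1]
  · choose! inv hmem hr hl using hinv
    refine ⟨fun f => ⟨inv f, hmem f f.2⟩, fun f => ⟨hl f f.2, hr f f.2⟩, ?_⟩
    refine Continuous.subtype_mk (continuous_pi fun y => continuous_discrete_rng.2 fun z => ?_) _
    -- `f⁻¹ y = z` is the open condition `f z = y`
    convert isOpen_setOf_apply_eq G' z y using 1
    ext f
    change inv f y = z ↔ (f : X → X) z = y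
    constructor
    · rintro rfl
      exact congrFun (hr f f.2) y
    · rintro rfl
      exact congrFun (hl f f.2) z
  · have : WeaklyLocallyCompactSpace G' := by
      refine ⟨fun f => ?_⟩
      rcases isEmpty_or_nonempty X with hX | ⟨⟨x⟩⟩
      · exact ⟨Set.univ, (Set.toFinite _).isCompact, Filter.univ_mem⟩
      · refine ⟨{h : G' | (h : X → X) x = (f : X → X) x}, ?_,
          (isOpen_setOf_apply_eq G' x _).mem_nhds rfl⟩
        rw [Subtype.isCompact_iff]
        convert hfso.isCompact_transporter x ((f : X → X) x) using 1
        rw [← hG']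
        exact Subtype.image_preimage_coe G' {h | h x = (f : X → X) x}
    infer_instance
end

section
/- Let G be a group acting on a countable set X. The following are equivalent: (i) there exists a G-invariant locally finite metric d on X, i.e. a metric with d(gx, gy) = d(x, y) for all g ∈ G and x, y ∈ X and all of whose balls are finite; (ii) the action of G on X is f.s.o. -/
/-- `Reach w n x y`: some path from `x` to `y` in the complete graph with edge weights `w` has
total weight exactly `n`. -/
inductive Reach {X : Type*} (w : X → X → ℕ) : ℕ → X → X → Prop
  | refl (x : X) : Reach w 0 x x
  | step {n : ℕ} {x y : X} (z : X) : Reach w n x y → Reach w (n + w y z) x z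

namespace Reach

variable {X : Type*} {w : X → X → ℕ}

theorem single (x y : X) : Reach w (w x y) x y := by
  simpa using Reach.step (w := w) y (Reach.refl x)

theorem trans {m n : ℕ} {x y z : X} (h : Reach w m x y) (h' : Reach w n y z) :
    Reach w (m + n) x z := by
  induction h' with
  | refl => simpa using h
  | step z _ ih => rw [← add_assoc]; exact (ih h).step z

theorem symm (hw : ∀ x y, w x y = w y x) {n : ℕ} {x y : X} (h : Reach w n x y) :
    Reach w n y x := by
  induction h with
  | refl x => exact .refl x
  | @step n x y z _ ih =>
    rw [add_comm, hw]
    exact (single z y).trans ih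

theorem map {f : X → X} (hf : ∀ x y, w (f x) (f y) = w x y) {n : ℕ} {x y : X}
    (h : Reach w n x y) : Reach w n (f x) (f y) := by
  induction h with
  | refl x => exact .refl _
  | @step n x y z _ ih =>
    rw [← hf]
    exact ih.step _

theorem eq_of_zero (hw : ∀ x y, 1 ≤ w x y) {n : ℕ} {x y : X} (h : Reach w n x y) (hn : n = 0) :
    x = y := by
  cases h with
  | refl => rfl
  | @step n _ y' z _ => have := hw y' y; omega

/-- Since edges have weight at least `1`, the last edge of a path of weight `n` starts at a point
reached with weight `< n`; finiteness follows by strong induction on `n`. -/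
theorem finite (hw : ∀ x y, 1 ≤ w x y) (hfin : ∀ x n, {y | w x y ≤ n}.Finite) (x : X) (n : ℕ) :
    {y | Reach w n x y}.Finite := by
  induction n using Nat.strong_induction_on with
  | _ n ih =>
    have hS : (⋃ m ∈ Set.Iio n, {y | Reach w m x y}).Finite :=
      (Set.finite_Iio n).biUnion fun m hm => ih m hm
    refine ((Set.finite_singleton x).union (hS.biUnion fun z _ => hfin z n)).subset ?_
    intro y hy
    cases hy with
    | refl => exact Or.inl rfl
    | @step m _ z _ h =>
      have := hw z y
      refine Or.inr (Set.mem_biUnion (x := z) ?_ ?_)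
      · exact Set.mem_biUnion (x := m) (by simp only [Set.mem_Iio]; omega) h
      · simp only [Set.mem_ofPred_eq]; omega

end Reach

theorem exists_weight {G X : Type*} [Group G] [MulAction G X] [Countable X] (h : IsFSO G X) :
    ∃ w : X → X → ℕ, (∀ x y, w x y = w y x) ∧ (∀ x y, 1 ≤ w x y) ∧
      (∀ (g : G) x y, w (g • x) (g • y) = w x y) ∧ ∀ x n, {y | w x y ≤ n}.Finite := by
  obtain ⟨φ, hφ⟩ := exists_injective_nat (Quotient (MulAction.orbitRel G (X × X)))
  let c : X → X → ℕ := fun x y => φ (Quotient.mk _ (x, y))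
  have hc : ∀ (g : G) x y, c (g • x) (g • y) = c x y := fun g x y =>
    congrArg φ (Quotient.sound (s := MulAction.orbitRel G (X × X)) ⟨g, rfl⟩)
  have hrow : ∀ x k, {y | c x y = k}.Finite := by
    intro x k
    rcases Set.eq_empty_or_nonempty {y | c x y = k} with he | ⟨y₀, hy₀⟩
    · simp [he]
    · refine (h x y₀).subset fun y hy => ?_
      have hcy : c x y = c x y₀ := hy.trans hy₀.symm
      obtain ⟨g, hg⟩ := Quotient.exact (s := MulAction.orbitRel G (X × X)) (hφ hcy)
      exact ⟨g, congrArg Prod.fst hg, congrArg Prod.snd hg⟩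
  refine ⟨fun x y => c x y + c y x + 1, fun x y => by ring, fun x y => Nat.le_add_left _ _,
    fun g x y => by simp only [hc], fun x n => ?_⟩
  refine ((Set.finite_Iic n).biUnion fun k _ => hrow x k).subset fun y hy => ?_
  simp only [Set.mem_ofPred_eq] at hy
  exact Set.mem_biUnion (x := c x y) (by simp only [Set.mem_Iic]; omega) rfl

/-- An action of a group on a countable set preserves a locally finite metric (a metric all
of whose balls are finite) if and only if it is f.s.o. -/
theorem invariant_locally_finite_metric_iff_fso
    {G X : Type*} [Group G] [MulAction G X] [Countable X] :
    (∃ d : X → X → ℝ,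
      (∀ x y : X, d x y = 0 ↔ x = y) ∧
      (∀ x y : X, d x y = d y x) ∧
      (∀ x y z : X, d x z ≤ d x y + d y z) ∧
      (∀ (g : G) (x y : X), d (g • x) (g • y) = d x y) ∧
      (∀ (x : X) (r : ℝ), {y : X | d x y ≤ r}.Finite)) ↔
    IsFSO G X := by
  constructor
  · rintro ⟨d, -, -, -, hinv, hfin⟩ x y
    refine (hfin x (d x y)).subset ?_
    rintro z ⟨g, hgx, rfl⟩
    have := hinv g x y
    rw [hgx] at this
    exact this.le
  · intro h
    obtain ⟨w, hsymm, hpos, hinv, hfin⟩ := exists_weight h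
    let d : X → X → ℕ := fun x y => sInf {n | Reach w n x y}
    -- Any two points are joined by an edge, so the infimum defining `d` is attained.
    have hd : ∀ x y, Reach w (d x y) x y := fun x y =>
      Nat.sInf_mem (s := {n | Reach w n x y}) ⟨_, Reach.single x y⟩
    have hle : ∀ {n x y}, Reach w n x y → d x y ≤ n := fun hn => Nat.sInf_le hn
    have hmap : ∀ (g : G) x y, d (g • x) (g • y) ≤ d x y := fun g x y =>
      hle ((hd x y).map (f := fun a => g • a) (hinv g))
    refine ⟨fun x y => d x y, fun x y => ?_, fun x y => ?_, fun x y z => ?_, fun g x y => ?_,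
      fun x r => ?_⟩
    · rw [Nat.cast_eq_zero]
      refine ⟨fun h0 => (hd x y).eq_of_zero hpos h0, ?_⟩
      rintro rfl
      exact Nat.le_zero.mp (hle (.refl x))
    · exact congrArg _ (le_antisymm (hle ((hd y x).symm hsymm)) (hle ((hd x y).symm hsymm)))
    · dsimp only
      exact_mod_cast hle ((hd x y).trans (hd y z))
    · refine congrArg _ (le_antisymm (hmap g x y) ?_)
      simpa using hmap g⁻¹ (g • x) (g • y)
    · refine ((Set.finite_Iic ⌊r⌋₊).biUnion fun n _ => Reach.finite hpos hfin x n).subset ?_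
      intro y hy
      exact Set.mem_biUnion (x := d x y) (Nat.le_floor hy) (hd x y)
end

section
/- Let G be a finitely generated group with an f.s.o. action on a countable set X. Then there exists a graph structure on X, i.e. a symmetric irreflexive adjacency relation Adj on X, such that the resulting graph is connected, locally finite (every x ∈ X has only finitely many neighbors), and G-invariant: for all g ∈ G and x, y ∈ X, Adj(x, y) holds if and only if Adj(gx, gy) holds. -/
/-- On a finite set the complete graph works, on an infinite one a ray indexed by `ℕ`. -/
lemma exists_connected_locally_finite (Q : Type*) [Countable Q] [Nonempty Q] :
    ∃ T : SimpleGraph Q, T.Connected ∧ ∀ q, (T.neighborSet q).Finite := by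
  cases finite_or_infinite Q with
  | inl h => exact ⟨⊤, SimpleGraph.connected_top, fun q => Set.toFinite _⟩
  | inr h =>
    obtain ⟨e⟩ : Nonempty (Q ≃ ℕ) := nonempty_equiv_of_countable
    refine ⟨(SimpleGraph.hasse ℕ).comap e, ?_, fun q => ?_⟩
    · rw [(SimpleGraph.Iso.comap e (SimpleGraph.hasse ℕ)).connected_iff]
      exact ⟨SimpleGraph.hasse_preconnected_of_succ ℕ⟩
    · refine ((Set.finite_Iic (e q + 1)).preimage e.injective.injOn).subset fun q' hq' => ?_
      simp only [SimpleGraph.mem_neighborSet, SimpleGraph.comap_adj, SimpleGraph.hasse_adj,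
        Nat.covBy_iff_add_one_eq] at hq'
      simp only [Set.mem_preimage, Set.mem_Iic]
      omega

/-- The graph on `X` whose edges are the `G`-translates of the pairs in `E`, with loops
discarded. -/
def translateGraph (G : Type*) {X : Type*} [Group G] [MulAction G X] (E : Set (X × X)) :
    SimpleGraph X :=
  SimpleGraph.fromRel fun x y => ∃ g : G, ∃ p ∈ E, g • p.1 = x ∧ g • p.2 = y

section

variable {G X : Type*} [Group G] [MulAction G X]

lemma translateGraph_adj_smul {E : Set (X × X)} {x y : X} (h : (translateGraph G E).Adj x y)
    (g : G) : (translateGraph G E).Adj (g • x) (g • y) := by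
  simp only [translateGraph, SimpleGraph.fromRel_adj] at h ⊢
  obtain ⟨hne, h⟩ := h
  refine ⟨fun h' => hne (smul_left_cancel g h'), ?_⟩
  rcases h with ⟨k, p, hp, rfl, rfl⟩ | ⟨k, p, hp, rfl, rfl⟩
  · exact Or.inl ⟨g * k, p, hp, mul_smul _ _ _, mul_smul _ _ _⟩
  · exact Or.inr ⟨g * k, p, hp, mul_smul _ _ _, mul_smul _ _ _⟩

lemma translateGraph_adj_smul_iff (E : Set (X × X)) (g : G) (x y : X) :
    (translateGraph G E).Adj (g • x) (g • y) ↔ (translateGraph G E).Adj x y :=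
  ⟨fun h => by simpa using translateGraph_adj_smul h g⁻¹, fun h => translateGraph_adj_smul h g⟩

lemma translateGraph_reachable_smul {E : Set (X × X)} {x y : X}
    (h : (translateGraph G E).Reachable x y) (g : G) :
    (translateGraph G E).Reachable (g • x) (g • y) :=
  h.map (⟨fun x => g • x, fun h => translateGraph_adj_smul h g⟩ :
    translateGraph G E →g translateGraph G E)

lemma translateGraph_reachable_of_mem {E : Set (X × X)} {x y : X} (h : (x, y) ∈ E) :
    (translateGraph G E).Reachable x y := by
  by_cases hxy : x = y
  · rw [hxy]
  · refine SimpleGraph.Adj.reachable ?_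
    simp only [translateGraph, SimpleGraph.fromRel_adj]
    exact ⟨hxy, Or.inl ⟨1, (x, y), h, one_smul _ _, one_smul _ _⟩⟩

/-- If `g₀ • a = x`, every other `g` with `g • a = x` differs from `g₀` by an element of the
stabilizer of `x`, so the points `g • b` lie in the stabilizer orbit of `g₀ • b`. -/
lemma IsFSO.finite_translates (hfso : IsFSO G X) (a b x : X) :
    {y : X | ∃ g : G, g • a = x ∧ g • b = y}.Finite := by
  by_cases h : ∃ g₀ : G, g₀ • a = x
  · obtain ⟨g₀, rfl⟩ := h
    refine (hfso (g₀ • a) (g₀ • b)).subset ?_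
    rintro y ⟨g, hg, rfl⟩
    exact ⟨g * g₀⁻¹, by simp [mul_smul, hg], by simp [mul_smul]⟩
  · refine Set.finite_empty.subset ?_
    rintro y ⟨g, hg, -⟩
    exact h ⟨g, hg⟩

lemma translateGraph_neighborSet_finite (hfso : IsFSO G X) {E : Set (X × X)} (x : X)
    (h₁ : {p ∈ E | ∃ g : G, g • p.1 = x}.Finite) (h₂ : {p ∈ E | ∃ g : G, g • p.2 = x}.Finite) :
    ((translateGraph G E).neighborSet x).Finite := by
  refine ((h₁.biUnion fun p _ => hfso.finite_translates p.1 p.2 x).union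
    (h₂.biUnion fun p _ => hfso.finite_translates p.2 p.1 x)).subset ?_
  intro y hy
  simp only [SimpleGraph.mem_neighborSet, translateGraph, SimpleGraph.fromRel_adj] at hy
  rcases hy with ⟨-, ⟨g, p, hp, h, h'⟩ | ⟨g, p, hp, h, h'⟩⟩
  · exact Or.inl (Set.mem_biUnion (x := p) ⟨hp, g, h⟩ ⟨g, h, h'⟩)
  · exact Or.inr (Set.mem_biUnion (x := p) ⟨hp, g, h'⟩ ⟨g, h', h⟩)

end

/-- If a finitely generated group has an f.s.o. action on a countable set `X`, then `X`
carries a connected, locally finite, `G`-invariant graph structure. -/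
theorem exists_invariant_locally_finite_connected_graph
    {G X : Type*} [Group G] [Group.FG G] [MulAction G X] [Countable X] [Nonempty X]
    (hfso : IsFSO G X) :
    ∃ Γ : SimpleGraph X, Γ.Connected ∧ (∀ x : X, (Γ.neighborSet x).Finite) ∧
      ∀ (g : G) (x y : X), Γ.Adj (g • x) (g • y) ↔ Γ.Adj x y := by
  let Q := MulAction.orbitRel.Quotient G X
  let mk : X → Q := Quotient.mk _
  let rep : Q → X := Quotient.out
  have hmk (g : G) (x : X) : mk (g • x) = mk x := Quotient.sound ⟨g, rfl⟩
  have hmkrep (q : Q) : mk (rep q) = q := Quotient.out_eq q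
  have hrep (x : X) : ∃ g : G, g • rep (mk x) = x := by
    obtain ⟨g, hg⟩ : (MulAction.orbitRel G X) x (rep (mk x)) :=
      (MulAction.orbitRel G X).symm (Quotient.mk_out (s := MulAction.orbitRel G X) x)
    exact ⟨g, hg⟩
  have : Countable Q := Quotient.countable
  have : Nonempty Q := ⟨mk (Classical.arbitrary X)⟩
  obtain ⟨T, hT, hTfin⟩ := exists_connected_locally_finite Q
  obtain ⟨S, hS⟩ := Group.FG.out (G := G)
  obtain ⟨q₀⟩ : Nonempty Q := inferInstance
  let A : Set (X × X) := {p | ∃ q q', T.Adj q q' ∧ (rep q, rep q') = p}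
  let B : Set (X × X) := (fun s : G => (rep q₀, s • rep q₀)) '' (S : Set G)
  have hB : B.Finite := S.finite_toSet.image _
  refine ⟨translateGraph G (A ∪ B), ?_, fun x => ?_, translateGraph_adj_smul_iff _⟩
  · have hgen (g : G) : (translateGraph G (A ∪ B)).Reachable (rep q₀) (g • rep q₀) := by
      have hg : g ∈ Subgroup.closure (S : Set G) := hS ▸ Subgroup.mem_top g
      induction hg using Subgroup.closure_induction with
      | mem s hs => exact translateGraph_reachable_of_mem (Or.inr ⟨s, hs, rfl⟩)
      | one => rw [one_smul]
      | mul a b _ _ ha hb =>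
        rw [mul_smul]
        exact ha.trans (translateGraph_reachable_smul hb a)
      | inv a _ ha => simpa using (translateGraph_reachable_smul ha a⁻¹).symm
    have hreps (q q' : Q) : (translateGraph G (A ∪ B)).Reachable (rep q) (rep q') := by
      obtain ⟨w⟩ := hT.preconnected q q'
      induction w with
      | nil => rfl
      | cons h _ ih =>
        exact (translateGraph_reachable_of_mem (Or.inl ⟨_, _, h, rfl⟩)).trans ih
    have hall (x : X) : (translateGraph G (A ∪ B)).Reachable (rep q₀) x := by
      obtain ⟨g, hg⟩ := hrep x
      have h := translateGraph_reachable_smul (hreps q₀ (mk x)) g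
      rw [hg] at h
      exact (hgen g).trans h
    have : Nonempty X := ⟨rep q₀⟩
    exact ⟨fun x y => (hall x).symm.trans (hall y)⟩
  · apply translateGraph_neighborSet_finite hfso
    · refine (((hTfin (mk x)).image fun q' => (rep (mk x), rep q')).union hB).subset ?_
      rintro p ⟨⟨q, q', h, rfl⟩ | hp, g, hg⟩
      · obtain rfl : q = mk x := by rw [← hg, hmk, hmkrep]
        exact Or.inl ⟨q', h, rfl⟩
      · exact Or.inr hp
    · refine (((hTfin (mk x)).image fun q => (rep q, rep (mk x))).union hB).subset ?_
      rintro p ⟨⟨q, q', h, rfl⟩ | hp, g, hg⟩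
      · obtain rfl : q' = mk x := by rw [← hg, hmk, hmkrep]
        exact Or.inl ⟨q, h.symm, rfl⟩
      · exact Or.inr hp
end

section
/- Let G be a group with an f.s.o. action on a set X. The following are equivalent: (i) there exists a G-invariant mean on X; (ii) there exists some x ∈ X and a G-invariant mean on the orbit Gx (a mean μ on the set Gx with μ(gE) = μ(E) for all g ∈ G and E ⊆ Gx); (iii) for every x ∈ X there exists a G-invariant mean on the orbit Gx. -/
/-!
A mean on one orbit extends by zero to a mean on `X`, so the content of the theorem is that an
invariant mean `μ` on `X` yields an invariant mean on the orbit of any given point `x₀`.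

Choose a representative `r` of each orbit and attach to a point `y` in the orbit of `r` the set
`F y = {g • x₀ | g • r = y}` (`transportSet`). It is a translate of the orbit of `x₀` under the
stabilizer of `r`, hence finite by the f.s.o. hypothesis; it is a nonempty subset of the orbit of
`x₀`, and `F (h • y) = h • F y`. Averaging the uniform distributions on the sets `F y` against `μ`,
`ν E = ∫ |F y ∩ E| / |F y| dμ(y)`, gives an invariant mean on the orbit of `x₀`.

The integral against a finitely additive `μ` is built in `IsMean.exists_integral`: a function with
values in `[0,1]` is rounded down to multiples of `1/(n+1)`, the resulting simple functions are
integrated by the finite sum `SimpleFunc.setToSimpleFunc`, and an ultrafilter limit over `n` is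
taken; the rounding error in additivity vanishes in the limit.
-/

/-- A mean on a set `X`: a finitely additive `[0,1]`-valued function on subsets of `X`
with total mass `1`. -/
def IsMean {X : Type*} (μ : Set X → ℝ) : Prop :=
  (∀ E : Set X, 0 ≤ μ E ∧ μ E ≤ 1) ∧ μ Set.univ = 1 ∧
    ∀ E F : Set X, Disjoint E F → μ (E ∪ F) = μ E + μ F

/-- A `G`-invariant mean on `X` exists. -/
def HasInvariantMean (G X : Type*) [Group G] [MulAction G X] : Prop :=
  ∃ μ : Set X → ℝ, IsMean μ ∧ ∀ (g : G) (E : Set X), μ ((g • ·) '' E) = μ E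

/-- A `G`-invariant mean on a (`G`-invariant) subset `Y` of `X` exists: a finitely additive
`[0,1]`-valued function on the subsets of `Y` with total mass `1`, invariant under `G`. -/
def HasInvariantMeanOn (G : Type*) {X : Type*} [Group G] [MulAction G X] (Y : Set X) : Prop :=
  ∃ μ : Set X → ℝ,
    (∀ E : Set X, E ⊆ Y → 0 ≤ μ E ∧ μ E ≤ 1) ∧ μ Y = 1 ∧
    (∀ E F : Set X, E ⊆ Y → F ⊆ Y → Disjoint E F → μ (E ∪ F) = μ E + μ F) ∧
    ∀ (g : G) (E : Set X), E ⊆ Y → μ ((g • ·) '' E) = μ E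

open MeasureTheory Filter Topology

/-! ### Integration against a finitely additive mean -/

/-- The function `f` rounded down to a multiple of `1/(n+1)`. The truncation at `1` makes the range
finite for arbitrary `f`, and has no effect when `f ≤ 1`. All subsets of `X` are measurable. -/
noncomputable def roundDown {X : Type*} (n : ℕ) (f : X → ℝ) : @SimpleFunc X ⊤ ℝ :=
  @SimpleFunc.mk X ⊤ ℝ (fun x => ((min ⌊((n : ℝ) + 1) * f x⌋₊ (n + 1) : ℕ) : ℝ) / ((n : ℝ) + 1))
    (fun _ => trivial) (by
      refine ((Set.finite_Iic (n + 1)).image (fun k : ℕ => (k : ℝ) / ((n : ℝ) + 1))).subset ?_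
      rintro _ ⟨x, rfl⟩
      exact ⟨_, Set.mem_Iic.2 (min_le_right _ _), rfl⟩)

lemma roundDown_apply {X : Type*} (n : ℕ) (f : X → ℝ) (x : X) :
    roundDown n f x =
      ((min ⌊((n : ℝ) + 1) * f x⌋₊ (n + 1) : ℕ) : ℝ) / ((n : ℝ) + 1) := rfl

lemma roundDown_nonneg {X : Type*} (n : ℕ) (f : X → ℝ) (x : X) : 0 ≤ roundDown n f x := by
  rw [roundDown_apply]; positivity

lemma roundDown_le_one {X : Type*} (n : ℕ) (f : X → ℝ) (x : X) : roundDown n f x ≤ 1 := by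
  rw [roundDown_apply, div_le_one (by positivity)]
  exact_mod_cast min_le_right _ _

lemma roundDown_le {X : Type*} (n : ℕ) {f : X → ℝ} {x : X} (h0 : 0 ≤ f x) :
    roundDown n f x ≤ f x := by
  rw [roundDown_apply, div_le_iff₀ (by positivity), mul_comm (f x)]
  refine le_trans ?_ (Nat.floor_le (by positivity))
  exact_mod_cast min_le_left _ _

lemma le_roundDown_add {X : Type*} (n : ℕ) {f : X → ℝ} {x : X} (h1 : f x ≤ 1) :
    f x ≤ roundDown n f x + 1 / ((n : ℝ) + 1) := by
  have hn : (0 : ℝ) < (n : ℝ) + 1 := by positivity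
  have hle : ⌊((n : ℝ) + 1) * f x⌋₊ ≤ n + 1 := by
    refine Nat.floor_le_of_le ?_
    push_cast
    nlinarith
  rw [roundDown_apply, min_eq_left hle, ← add_div, le_div_iff₀ hn, mul_comm (f x)]
  exact (Nat.lt_floor_add_one _).le

/-- The integral of a simple function against a set function `μ` on all subsets of `X`. -/
noncomputable def simpleIntegral {X : Type*} (μ : Set X → ℝ) (s : @SimpleFunc X ⊤ ℝ) : ℝ :=
  @SimpleFunc.setToSimpleFunc X ℝ ℝ _ _ _ _ ⊤ (fun E => μ E • ContinuousLinearMap.id ℝ ℝ) s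

section

variable {X : Type*} {μ : Set X → ℝ}

/-- The additivity notion of the simple function library, relative to the zero measure (for which
every set has finite measure and every function is integrable), is plain finite additivity. -/
lemma IsMean.finMeasAdditive (hμ : IsMean μ) :
    @FinMeasAdditive X _ _ ⊤ (@Measure.instZero X ⊤).zero
      (fun E => μ E • ContinuousLinearMap.id ℝ ℝ) := by
  intro s t _ _ _ _ hst
  simp only [hμ.2.2 s t hst, add_smul]

lemma IsMean.simpleIntegral_add (hμ : IsMean μ) (s t : @SimpleFunc X ⊤ ℝ) :
    simpleIntegral μ (s + t) = simpleIntegral μ s + simpleIntegral μ t := by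
  let _ : MeasurableSpace X := ⊤
  exact SimpleFunc.setToSimpleFunc_add (μ := (0 : Measure X)) _ hμ.finMeasAdditive
    integrable_zero_measure integrable_zero_measure

lemma IsMean.simpleIntegral_mono (hμ : IsMean μ) {s t : @SimpleFunc X ⊤ ℝ}
    (h : ∀ x, s x ≤ t x) : simpleIntegral μ s ≤ simpleIntegral μ t := by
  let _ : MeasurableSpace X := ⊤
  refine SimpleFunc.setToSimpleFunc_mono (μ := (0 : Measure X)) hμ.finMeasAdditive ?_
    integrable_zero_measure integrable_zero_measure h
  intro E _ _ x hx
  exact mul_nonneg (hμ.1 E).1 hx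

lemma IsMean.simpleIntegral_const (hμ : IsMean μ) (c : ℝ) :
    simpleIntegral μ (@SimpleFunc.const X ℝ ⊤ c) = c := by
  let _ : MeasurableSpace X := ⊤
  have h0 : μ ∅ = 0 := by
    have := hμ.2.2 ∅ ∅ (by simp)
    simp only [Set.union_empty] at this
    linarith
  refine (SimpleFunc.setToSimpleFunc_const _ (by simp [h0]) c).trans ?_
  simp [hμ.2.1]

lemma simpleIntegral_comp (e : X ≃ X) (he : ∀ E, μ (e ⁻¹' E) = μ E)
    {s t : @SimpleFunc X ⊤ ℝ} (hst : ∀ x, t x = s (e x)) :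
    simpleIntegral μ t = simpleIntegral μ s := by
  let _ : MeasurableSpace X := ⊤
  have hfun : (t : X → ℝ) = s ∘ e := funext hst
  have hrange : t.range = s.range := by
    apply Finset.coe_injective
    rw [SimpleFunc.coe_range, SimpleFunc.coe_range, hfun, e.surjective.range_comp]
  unfold simpleIntegral SimpleFunc.setToSimpleFunc
  rw [hrange]
  refine Finset.sum_congr rfl fun v _ => ?_
  simp only [hfun, Set.preimage_comp, he]

/-- Integration of `[0,1]`-valued functions against a mean: a normalized additive functional that is
invariant under every permutation of `X` preserving the mean. -/
lemma IsMean.exists_integral (hμ : IsMean μ) :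
    ∃ I : (X → ℝ) → ℝ, (∀ f, 0 ≤ I f ∧ I f ≤ 1) ∧ I (fun _ => 1) = 1 ∧
      (∀ f g : X → ℝ, (∀ x, 0 ≤ f x) → (∀ x, 0 ≤ g x) → (∀ x, f x + g x ≤ 1) →
        I (fun x => f x + g x) = I f + I g) ∧
      ∀ (e : X ≃ X), (∀ E, μ (e ⁻¹' E) = μ E) → ∀ f : X → ℝ, I (fun x => f (e x)) = I f := by
  let a : (X → ℝ) → ℕ → ℝ := fun f n => simpleIntegral μ (roundDown n f)
  have ha : ∀ f n, a f n ∈ Set.Icc (0 : ℝ) 1 := by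
    intro f n
    constructor
    · rw [← hμ.simpleIntegral_const 0]
      exact hμ.simpleIntegral_mono (roundDown_nonneg n f)
    · rw [← hμ.simpleIntegral_const 1]
      exact hμ.simpleIntegral_mono (roundDown_le_one n f)
  have hlim : ∀ f, ∃ l ∈ Set.Icc (0 : ℝ) 1, Tendsto (a f) (hyperfilter ℕ : Filter ℕ) (𝓝 l) := by
    intro f
    obtain ⟨l, hl, h⟩ := isCompact_Icc.ultrafilter_le_nhds ((hyperfilter ℕ).map (a f))
      (le_principal_iff.2 (mem_map.2 (univ_mem' (ha f))))
    exact ⟨l, hl, h⟩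
  choose I hI hIlim using hlim
  refine ⟨I, hI, ?_, ?_, ?_⟩
  · refine tendsto_nhds_unique (hIlim _) (tendsto_const_nhds.congr fun n => ?_)
    refine (hμ.simpleIntegral_const 1).symm.trans (congrArg _ ?_)
    refine @SimpleFunc.ext X ℝ ⊤ _ _ fun x => ?_
    have hfl : ⌊((n : ℝ) + 1) * 1⌋₊ = n + 1 := by
      rw [mul_one]; exact_mod_cast Nat.floor_natCast (R := ℝ) (n + 1)
    rw [roundDown_apply, hfl, min_self, @SimpleFunc.const_apply X ℝ ⊤]
    push_cast
    rw [div_self (by positivity)]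
  · intro f g hf hg hfg
    have hf1 : ∀ x, f x ≤ 1 := fun x => by linarith [hg x, hfg x]
    have hg1 : ∀ x, g x ≤ 1 := fun x => by linarith [hf x, hfg x]
    have hsmall : Tendsto (fun n : ℕ => 1 / ((n : ℝ) + 1)) (hyperfilter ℕ : Filter ℕ) (𝓝 0) :=
      tendsto_one_div_add_atTop_nhds_zero_nat.mono_left Nat.hyperfilter_le_atTop
    have hsum := (hIlim f).add (hIlim g)
    apply le_antisymm
    · have hup := (hsum.add hsmall).add hsmall
      rw [add_zero, add_zero] at hup
      refine le_of_tendsto_of_tendsto' (hIlim _) hup fun n => ?_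
      have := hμ.simpleIntegral_mono (s := roundDown n fun x => f x + g x)
        (t := roundDown n f + roundDown n g + @SimpleFunc.const X ℝ ⊤ (1 / ((n : ℝ) + 1))
          + @SimpleFunc.const X ℝ ⊤ (1 / ((n : ℝ) + 1))) (fun x => by
          have h1 := roundDown_le n (f := fun x => f x + g x) (x := x)
            (add_nonneg (hf x) (hg x))
          have h2 := le_roundDown_add n (hf1 x)
          have h3 := le_roundDown_add n (hg1 x)
          simp only [SimpleFunc.coe_add, Pi.add_apply, SimpleFunc.const_apply]
          linarith)
      simpa only [hμ.simpleIntegral_add, hμ.simpleIntegral_const] using this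
    · have hup := (hIlim fun x => f x + g x).add hsmall
      rw [add_zero] at hup
      refine le_of_tendsto_of_tendsto' hsum hup fun n => ?_
      have := hμ.simpleIntegral_mono (s := roundDown n f + roundDown n g)
        (t := (roundDown n fun x => f x + g x)
          + @SimpleFunc.const X ℝ ⊤ (1 / ((n : ℝ) + 1))) (fun x => by
          have h1 := le_roundDown_add n (f := fun x => f x + g x) (x := x) (hfg x)
          have h2 := roundDown_le n (hf x)
          have h3 := roundDown_le n (hg x)
          simp only [SimpleFunc.coe_add, Pi.add_apply, SimpleFunc.const_apply]
          linarith)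
      simpa only [hμ.simpleIntegral_add, hμ.simpleIntegral_const] using this
  · intro e he f
    refine tendsto_nhds_unique (hIlim _) ((hIlim f).congr fun n => ?_)
    exact (simpleIntegral_comp e he fun x => rfl).symm

end

/-! ### Transport between orbits -/

section

variable {G X : Type*} [Group G] [MulAction G X]

variable (G) in
/-- The set `{g • x₀ | g • r = y}`, where `r` is the chosen representative of the orbit of `y`. -/
def transportSet (x₀ y : X) : Set X :=
  {z | ∃ g : G, g • (Quotient.mk (MulAction.orbitRel G X) y).out = y ∧ g • x₀ = z}

lemma exists_smul_out (y : X) :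
    ∃ g : G, g • (Quotient.mk (MulAction.orbitRel G X) y).out = y := by
  have h : (MulAction.orbitRel G X) y (Quotient.mk (MulAction.orbitRel G X) y).out :=
    (MulAction.orbitRel G X).symm (Quotient.mk_out (s := MulAction.orbitRel G X) y)
  exact MulAction.orbitRel_apply.1 h

lemma transportSet_nonempty (x₀ y : X) : (transportSet G x₀ y).Nonempty := by
  obtain ⟨g, hg⟩ := exists_smul_out (G := G) y
  exact ⟨g • x₀, g, hg, rfl⟩

lemma transportSet_subset (x₀ y : X) : transportSet G x₀ y ⊆ MulAction.orbit G x₀ := by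
  rintro _ ⟨g, _, rfl⟩
  exact ⟨g, rfl⟩

lemma IsFSO.transportSet_finite (hfso : IsFSO G X) (x₀ y : X) :
    (transportSet G x₀ y).Finite := by
  obtain ⟨k, hk⟩ := exists_smul_out (G := G) y
  refine ((hfso (Quotient.mk (MulAction.orbitRel G X) y).out x₀).image (k • ·)).subset ?_
  rintro _ ⟨g, hg, rfl⟩
  refine ⟨(k⁻¹ * g) • x₀, ⟨k⁻¹ * g, ?_, rfl⟩, ?_⟩
  · rw [mul_smul, hg, inv_smul_eq_iff, hk]
  · simp [mul_smul]

lemma transportSet_smul (x₀ : X) (h : G) (y : X) :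
    transportSet G x₀ (h • y) = (h • ·) '' transportSet G x₀ y := by
  have hq : Quotient.mk (MulAction.orbitRel G X) (h • y)
      = Quotient.mk (MulAction.orbitRel G X) y :=
    Quotient.sound (s := MulAction.orbitRel G X) ⟨h, rfl⟩
  ext z
  unfold transportSet
  rw [hq]
  constructor
  · rintro ⟨g, hg, rfl⟩
    refine ⟨(h⁻¹ * g) • x₀, ⟨h⁻¹ * g, ?_, rfl⟩, ?_⟩
    · rw [mul_smul, hg, inv_smul_smul]
    · simp [mul_smul]
  · rintro ⟨_, ⟨g, hg, rfl⟩, rfl⟩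
    exact ⟨h * g, by rw [mul_smul, hg], by simp [mul_smul]⟩

variable (G) in
/-- The proportion of the points of `transportSet G x₀ y` that lie in `E`. -/
noncomputable def density (x₀ : X) (E : Set X) (y : X) : ℝ :=
  ((transportSet G x₀ y ∩ E).ncard : ℝ) / ((transportSet G x₀ y).ncard : ℝ)

lemma density_nonneg (x₀ : X) (E : Set X) (y : X) : 0 ≤ density G x₀ E y := by
  unfold density; positivity

lemma IsFSO.density_le_one (hfso : IsFSO G X) (x₀ : X) (E : Set X) (y : X) :
    density G x₀ E y ≤ 1 := by
  refine div_le_one_of_le₀ ?_ (by positivity)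
  exact_mod_cast Set.ncard_le_ncard Set.inter_subset_left (hfso.transportSet_finite x₀ y)

lemma IsFSO.density_orbit (hfso : IsFSO G X) (x₀ y : X) :
    density G x₀ (MulAction.orbit G x₀) y = 1 := by
  unfold density
  rw [Set.inter_eq_left.2 (transportSet_subset x₀ y)]
  refine div_self ?_
  have := (Set.ncard_pos (hfso.transportSet_finite x₀ y)).2 (transportSet_nonempty x₀ y)
  exact_mod_cast this.ne'

lemma IsFSO.density_union (hfso : IsFSO G X) (x₀ : X) {E F : Set X} (hEF : Disjoint E F) (y : X) :
    density G x₀ (E ∪ F) y = density G x₀ E y + density G x₀ F y := by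
  have hfin := hfso.transportSet_finite x₀ y
  unfold density
  rw [Set.inter_union_distrib_left, Set.ncard_union_eq
    (hEF.mono Set.inter_subset_right Set.inter_subset_right)
    (hfin.subset Set.inter_subset_left) (hfin.subset Set.inter_subset_left), Nat.cast_add, add_div]

lemma density_smul (x₀ : X) (E : Set X) (g : G) (y : X) :
    density G x₀ ((g • ·) '' E) (g • y) = density G x₀ E y := by
  have hinj : Function.Injective (fun x : X => g • x) := MulAction.injective g
  unfold density
  rw [transportSet_smul, ← Set.image_inter hinj, Set.ncard_image_of_injective _ hinj,
    Set.ncard_image_of_injective _ hinj]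

theorem HasInvariantMean.orbit (h : HasInvariantMean G X) (hfso : IsFSO G X) (x₀ : X) :
    HasInvariantMeanOn G (MulAction.orbit G x₀) := by
  obtain ⟨μ, hμ, hinv⟩ := h
  obtain ⟨I, hI, hone, hadd, hcomp⟩ := hμ.exists_integral
  refine ⟨fun E => I (density G x₀ E), fun E _ => hI _, ?_, ?_, ?_⟩
  · rw [← hone]
    exact congrArg I (funext (hfso.density_orbit x₀))
  · intro E F _ _ hEF
    have hfun : density G x₀ (E ∪ F) = fun y => density G x₀ E y + density G x₀ F y :=
      funext (hfso.density_union x₀ hEF)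
    simp only [hfun]
    refine hadd _ _ (density_nonneg x₀ E) (density_nonneg x₀ F) fun y => ?_
    rw [← hfso.density_union x₀ hEF]
    exact hfso.density_le_one x₀ _ y
  · intro g E _
    have hpre : ∀ S : Set X, μ (MulAction.toPerm g ⁻¹' S) = μ S := by
      intro S
      rw [← hinv g (MulAction.toPerm g ⁻¹' S)]
      exact congrArg μ (Set.image_preimage_eq S (MulAction.surjective g))
    refine (hcomp (MulAction.toPerm g) hpre _).symm.trans (congrArg I (funext fun y => ?_))
    exact density_smul x₀ E g y

/-- A mean on an orbit extends by zero to `X`. -/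
theorem HasInvariantMeanOn.hasInvariantMean {x : X}
    (h : HasInvariantMeanOn G (MulAction.orbit G x)) : HasInvariantMean G X := by
  obtain ⟨μ, hb, hone, hadd, hinv⟩ := h
  refine ⟨fun E => μ (E ∩ MulAction.orbit G x),
    ⟨fun E => hb _ Set.inter_subset_right, by simpa using hone, ?_⟩, ?_⟩
  · intro E F hEF
    simp only [Set.union_inter_distrib_right]
    exact hadd _ _ Set.inter_subset_right Set.inter_subset_right
      (hEF.mono Set.inter_subset_left Set.inter_subset_left)
  · intro g E
    simp only
    rw [← hinv g (E ∩ MulAction.orbit G x) Set.inter_subset_right, Set.image_inter (MulAction.injective g)]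
    congr 2
    exact (MulAction.smul_orbit g x).symm

end

/-- An f.s.o. action is amenable if and only if some orbit carries an invariant mean,
if and only if every orbit carries an invariant mean. -/
theorem fso_amenable_iff_orbit_amenable
    {G X : Type*} [Group G] [MulAction G X] [Nonempty X] (hfso : IsFSO G X) :
    (HasInvariantMean G X ↔ ∃ x : X, HasInvariantMeanOn G (MulAction.orbit G x)) ∧
    (HasInvariantMean G X ↔ ∀ x : X, HasInvariantMeanOn G (MulAction.orbit G x)) := by
  obtain ⟨x₀⟩ := ‹Nonempty X›
  exact ⟨⟨fun h => ⟨x₀, h.orbit hfso x₀⟩, fun ⟨_, h⟩ => h.hasInvariantMean⟩,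
    ⟨fun h x => h.orbit hfso x, fun h => (h x₀).hasInvariantMean⟩⟩
end

section
/- Let G be a group with an f.s.o. action on a set X admitting a G-invariant mean, and let H be a subgroup of G. Then for every x ∈ X there exists an H-invariant mean on the H-orbit Hx, i.e. a mean μ on the set Hx with μ(hE) = μ(E) for all h ∈ H and E ⊆ Hx. -/
open Filter Topology

namespace IsMean

variable {X : Type*} {μ : Set X → ℝ}

lemma empty (hμ : IsMean μ) : μ ∅ = 0 := by
  have h := hμ.2.2 ∅ ∅ (by simp)
  simp at h
  exact h

end IsMean

/-- The layer-cake integral of `a : X → ℕ` against `μ`, truncated at height `N`. It is the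
integral of `a` when `a ≤ N`. -/
def layerSum {X : Type*} (μ : Set X → ℝ) (N : ℕ) (a : X → ℕ) : ℝ :=
  ∑ k ∈ Finset.range N, μ {z | k < a z}

section LayerSum

variable {X : Type*} {μ : Set X → ℝ}

lemma sum_level_sets (hμ : IsMean μ) (a : X → ℕ) (A : Set X) (N : ℕ) :
    ∑ k ∈ Finset.range N, μ {z | a z = k ∧ z ∈ A} = μ {z | a z < N ∧ z ∈ A} := by
  induction N with
  | zero => simp [hμ.empty]
  | succ N ih =>
    rw [Finset.sum_range_succ, ih, ← hμ.2.2]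
    · congr 1
      ext z
      simp only [Set.mem_union, Set.mem_ofPred_eq]
      grind
    · rw [Set.disjoint_left]
      rintro z ⟨h1, _⟩ ⟨h2, _⟩
      omega

open Classical in
lemma layerSum_add_indicator (hμ : IsMean μ) {N : ℕ} (a b : X → ℕ) (A : Set X)
    (hb : ∀ z, b z = a z + if z ∈ A then 1 else 0) (hN : ∀ z, b z ≤ N) :
    layerSum μ N b = layerSum μ N a + μ A := by
  have hA : μ A = ∑ k ∈ Finset.range N, μ {z | a z = k ∧ z ∈ A} := by
    rw [sum_level_sets hμ]
    congr 1
    ext z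
    have h1 := hb z
    have h2 := hN z
    simp only [Set.mem_ofPred_eq]
    constructor
    · intro hz
      rw [if_pos hz] at h1
      exact ⟨by omega, hz⟩
    · exact fun h => h.2
  rw [hA, layerSum, layerSum, ← Finset.sum_add_distrib]
  refine Finset.sum_congr rfl fun k _ => ?_
  rw [← hμ.2.2]
  · congr 1
    ext z
    have h1 := hb z
    simp only [Set.mem_union, Set.mem_ofPred_eq]
    by_cases hz : z ∈ A
    · simp only [hz, if_true] at h1
      simp only [hz, and_true]
      omega
    · simp only [hz, if_false] at h1
      simp only [hz, and_false, or_false]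
      omega
  · rw [Set.disjoint_left]
    rintro z h1 ⟨h2, _⟩
    simp only [Set.mem_ofPred_eq] at h1
    omega

lemma layerSum_add (hμ : IsMean μ) {N : ℕ} (a b : X → ℕ) (hN : ∀ z, a z + b z ≤ N) :
    layerSum μ N (fun z => a z + b z) = layerSum μ N a + layerSum μ N b := by
  classical
  -- Build up `b` one layer at a time: `min b (m + 1)` is `min b m` plus the indicator of `{m < b}`.
  have key : ∀ m : ℕ, layerSum μ N (fun z => a z + min (b z) m) =
      layerSum μ N a + ∑ k ∈ Finset.range m, μ {z | k < b z} := by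
    intro m
    induction m with
    | zero => simp
    | succ m ih =>
      rw [Finset.sum_range_succ, ← add_assoc, ← ih]
      refine layerSum_add_indicator hμ _ _ _ (fun z => ?_) (fun z => ?_)
      · simp only [Set.mem_ofPred_eq]
        split_ifs <;> omega
      · have := hN z
        omega
  have h := key N
  have hmin : (fun z => a z + min (b z) N) = fun z => a z + b z := by
    funext z
    have := hN z
    omega
  rw [hmin] at h
  exact h

end LayerSum

/-- The points `h • x` with `h ∈ H` carrying the chosen representative of the `H`-orbit of `z`
to `z`. -/
def orbitTransfer {G X : Type*} [Group G] [MulAction G X] (H : Subgroup G) (x z : X) : Set X :=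
  {w | ∃ h : H, h • (Quotient.out (Quotient.mk (MulAction.orbitRel H X) z)) = z ∧ h • x = w}

section OrbitTransfer

variable {G X : Type*} [Group G] [MulAction G X] (H : Subgroup G) (x : X)

lemma exists_smul_out_s13 (z : X) :
    ∃ h : H, h • (Quotient.out (Quotient.mk (MulAction.orbitRel H X) z)) = z := by
  have h := Setoid.symm' _ (Quotient.mk_out (s := MulAction.orbitRel H X) z)
  exact (MulAction.orbitRel_apply.1 h)

lemma orbitTransfer_nonempty (z : X) : (orbitTransfer H x z).Nonempty := by
  obtain ⟨h, hh⟩ := exists_smul_out_s13 H z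
  exact ⟨h • x, h, hh, rfl⟩

lemma orbitTransfer_subset (z : X) : orbitTransfer H x z ⊆ MulAction.orbit H x := by
  rintro w ⟨h, -, rfl⟩
  exact ⟨h, rfl⟩

lemma orbitTransfer_finite (hfso : IsFSO G X) (z : X) : (orbitTransfer H x z).Finite := by
  obtain ⟨h₀, hh₀⟩ := exists_smul_out_s13 H z
  refine ((hfso (Quotient.out (Quotient.mk (MulAction.orbitRel H X) z)) x).image
    (fun w => h₀ • w)).subset ?_
  rintro w ⟨h, hh, rfl⟩
  refine ⟨((h₀⁻¹ * h : H) : G) • x, ⟨((h₀⁻¹ * h : H) : G), ?_, rfl⟩, ?_⟩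
  · change (h₀⁻¹ * h) • (Quotient.out (Quotient.mk (MulAction.orbitRel H X) z)) = _
    rw [mul_smul, hh, inv_smul_eq_iff, hh₀]
  · change h₀ • (h₀⁻¹ * h) • x = h • x
    rw [mul_smul, smul_inv_smul]

lemma orbitTransfer_smul (g : H) (z : X) :
    orbitTransfer H x (g • z) = (g • ·) '' orbitTransfer H x z := by
  have hq : Quotient.mk (MulAction.orbitRel H X) (g • z) =
      Quotient.mk (MulAction.orbitRel H X) z :=
    Quotient.sound (MulAction.orbitRel_apply.2 ⟨g, rfl⟩)
  ext w
  simp only [orbitTransfer, hq, Set.mem_image, Set.mem_ofPred_eq]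
  constructor
  · rintro ⟨h, hh, rfl⟩
    refine ⟨(g⁻¹ * h) • x, ⟨g⁻¹ * h, ?_, rfl⟩, ?_⟩
    · rw [mul_smul, hh, inv_smul_smul]
    · rw [mul_smul, smul_inv_smul]
  · rintro ⟨_, ⟨h, hh, rfl⟩, rfl⟩
    exact ⟨g * h, by rw [mul_smul, hh], by rw [mul_smul]⟩

/-- The mass `|F z ∩ E| / |F z|` given to `E` by the uniform measure on `F z = orbitTransfer H x z`,
multiplied by `n` and rounded down. -/
noncomputable def discreteMass (n : ℕ) (E : Set X) (z : X) : ℕ :=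
  n * (orbitTransfer H x z ∩ E).ncard / (orbitTransfer H x z).ncard

lemma discreteMass_le (hfso : IsFSO G X) (n : ℕ) (E : Set X) (z : X) :
    discreteMass H x n E z ≤ n := by
  have h1 : (orbitTransfer H x z ∩ E).ncard ≤ (orbitTransfer H x z).ncard :=
    Set.ncard_le_ncard Set.inter_subset_left (orbitTransfer_finite H x hfso z)
  exact Nat.div_le_of_le_mul (by rw [mul_comm]; exact Nat.mul_le_mul_right n h1)

lemma discreteMass_orbit (hfso : IsFSO G X) (n : ℕ) (z : X) :
    discreteMass H x n (MulAction.orbit H x) z = n := by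
  have h0 : 0 < (orbitTransfer H x z).ncard :=
    (Set.ncard_pos (orbitTransfer_finite H x hfso z)).2 (orbitTransfer_nonempty H x z)
  rw [discreteMass, Set.inter_eq_left.2 (orbitTransfer_subset H x z), Nat.mul_div_cancel _ h0]

lemma discreteMass_smul (n : ℕ) (g : H) (E : Set X) (z : X) :
    discreteMass H x n ((g • ·) '' E) (g • z) = discreteMass H x n E z := by
  have hg : Function.Injective (g • · : X → X) := MulAction.injective g
  rw [discreteMass, discreteMass, orbitTransfer_smul, ← Set.image_inter hg,
    Set.ncard_image_of_injective _ hg, Set.ncard_image_of_injective _ hg]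

open Classical in
/-- Rounding makes `discreteMass` fail to be additive by at most `1`; the set `A` is where it
fails. -/
lemma discreteMass_union (hfso : IsFSO G X) (n : ℕ) {E F : Set X} (hEF : Disjoint E F) :
    ∃ A : Set X, ∀ z, discreteMass H x n (E ∪ F) z =
      (discreteMass H x n E z + discreteMass H x n F z) + if z ∈ A then 1 else 0 := by
  refine ⟨{z | discreteMass H x n E z + discreteMass H x n F z < discreteMass H x n (E ∪ F) z},
    fun z => ?_⟩
  have hfin := orbitTransfer_finite H x hfso z
  have h0 : 0 < (orbitTransfer H x z).ncard :=
    (Set.ncard_pos hfin).2 (orbitTransfer_nonempty H x z)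
  have hcard : (orbitTransfer H x z ∩ (E ∪ F)).ncard =
      (orbitTransfer H x z ∩ E).ncard + (orbitTransfer H x z ∩ F).ncard := by
    rw [Set.inter_union_distrib_left]
    exact Set.ncard_union_eq (hEF.mono Set.inter_subset_right Set.inter_subset_right)
      (hfin.subset Set.inter_subset_left) (hfin.subset Set.inter_subset_left)
  have hdiv := Nat.add_div (a := n * (orbitTransfer H x z ∩ E).ncard)
    (b := n * (orbitTransfer H x z ∩ F).ncard) h0
  rw [← mul_add, ← hcard] at hdiv
  simp only [Set.mem_ofPred_eq]
  change discreteMass H x n (E ∪ F) z = discreteMass H x n E z + discreteMass H x n F z + _ at hdiv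
  split_ifs at hdiv ⊢ <;> omega

end OrbitTransfer

/-- If an f.s.o. action of `G` on `X` admits a `G`-invariant mean, then every subgroup `H`
of `G` acts amenably on each of its orbits. -/
theorem subgroup_acts_amenably_on_orbits_of_fso_amenable
    {G X : Type*} [Group G] [MulAction G X] (hfso : IsFSO G X)
    (hmean : HasInvariantMean G X) (H : Subgroup G) (x : X) :
    HasInvariantMeanOn ↥H (MulAction.orbit ↥H x) := by
  classical
  obtain ⟨μ, hμ, hinv⟩ := hmean
  let ν : ℕ → Set X → ℝ := fun n E =>
    layerSum μ (n + 1) (discreteMass H x (n + 1) E) / ((n : ℝ) + 1)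
  have hpos : ∀ n : ℕ, (0 : ℝ) < (n : ℝ) + 1 := fun n => by positivity
  have hν01 : ∀ n E, ν n E ∈ Set.Icc (0 : ℝ) 1 := by
    intro n E
    refine ⟨div_nonneg (Finset.sum_nonneg fun k _ => (hμ.1 _).1) (hpos n).le, ?_⟩
    rw [div_le_one (hpos n)]
    refine (Finset.sum_le_sum fun k _ => (hμ.1 _).2).trans ?_
    simp
  have hνY : ∀ n, ν n (MulAction.orbit H x) = 1 := by
    intro n
    rw [div_eq_one_iff_eq (hpos n).ne', layerSum]
    rw [Finset.sum_congr rfl (g := fun _ => (1 : ℝ))]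
    · simp
    · intro k hk
      rw [← hμ.2.1]
      congr 1
      ext z
      simpa [discreteMass_orbit H x hfso] using Finset.mem_range.1 hk
  have hνinv : ∀ n (g : H) E, ν n ((g • ·) '' E) = ν n E := by
    intro n g E
    simp only [ν, layerSum]
    congr 1
    refine Finset.sum_congr rfl fun k _ => ?_
    rw [← hinv (g : G) {z | k < discreteMass H x (n + 1) E z}]
    congr 1
    ext z
    simp only [Set.mem_image, Set.mem_ofPred_eq]
    constructor
    · intro hz
      refine ⟨g⁻¹ • z, ?_, smul_inv_smul g z⟩
      rwa [← discreteMass_smul H x (n + 1) g E, smul_inv_smul]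
    · rintro ⟨w, hw, rfl⟩
      rw [← discreteMass_smul H x (n + 1) g E] at hw
      exact hw
  have hνadd : ∀ (n : ℕ) (E F : Set X), Disjoint E F →
      ν n (E ∪ F) - (ν n E + ν n F) ∈ Set.Icc (0 : ℝ) (1 / ((n : ℝ) + 1)) := by
    intro n E F hEF
    obtain ⟨A, hA⟩ := discreteMass_union H x hfso (n + 1) hEF
    have hle := discreteMass_le H x hfso (n + 1) (E ∪ F)
    have h1 := layerSum_add_indicator hμ _ _ A hA hle
    rw [layerSum_add hμ _ _ fun z => by have := hle z; rw [hA z] at this; omega] at h1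
    have h2 : ν n (E ∪ F) - (ν n E + ν n F) = μ A / ((n : ℝ) + 1) := by
      simp only [ν]
      rw [h1]
      ring
    rw [h2]
    exact ⟨div_nonneg (hμ.1 A).1 (hpos n).le, div_le_div_of_nonneg_right (hμ.1 A).2 (hpos n).le⟩
  have hlim : ∀ E, ∃ L ∈ Set.Icc (0 : ℝ) 1,
      Tendsto (fun n => ν n E) (hyperfilter ℕ : Filter ℕ) (𝓝 L) := by
    intro E
    obtain ⟨L, hL, h⟩ := isCompact_Icc.ultrafilter_le_nhds
      ((hyperfilter ℕ).map fun n => ν n E)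
      (by
        rw [le_principal_iff]
        exact Filter.Eventually.of_forall (f := (hyperfilter ℕ : Filter ℕ)) fun n => hν01 n E)
    exact ⟨L, hL, h⟩
  choose m hm hmt using hlim
  refine ⟨m, fun E _ => hm E, ?_, ?_, ?_⟩
  · refine tendsto_nhds_unique (hmt _) ?_
    simp only [hνY]
    exact tendsto_const_nhds
  · intro E F _ _ hEF
    have h1 := (hmt (E ∪ F)).sub ((hmt E).add (hmt F))
    have h0 : Tendsto (fun n : ℕ => 1 / ((n : ℝ) + 1)) (hyperfilter ℕ : Filter ℕ) (𝓝 0) :=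
      tendsto_one_div_add_atTop_nhds_zero_nat.mono_left Nat.hyperfilter_le_atTop
    have h2 := tendsto_nhds_unique h1 (squeeze_zero (fun n => (hνadd n E F hEF).1)
      (fun n => (hνadd n E F hEF).2) h0)
    linarith
  · intro g E _
    refine tendsto_nhds_unique (hmt _) ?_
    simp only [hνinv]
    exact hmt E
end
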